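/- Let y ∈ {-1,1}, μ ∈ ℝ, σ > 0, and let σ̂² be the variance of the probit-tilted Gaussian p(x) ∝ Φ(y x) φ(x; μ, σ²). Then 0 < σ̂² < σ², i.e., conditioning a Gaussian on a probit observation strictly reduces variance. -/

import Mathlib

open MeasureTheory

noncomputable def stdPdf (x : ℝ) : ℝ :=
  (Real.sqrt (2 * Real.pi))⁻¹ * Real.exp (-x ^ 2 / 2)

noncomputable def stdCdf (x : ℝ) : ℝ := ∫ u in Set.Iic x, stdPdf u

noncomputable def gPdf (μ σ x : ℝ) : ℝ :=
  (σ * Real.sqrt (2 * Real.pi))⁻¹ * Real.exp (-(x - μ) ^ 2 / (2 * σ ^ 2))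

section ProbitLink

lemma stdPdf_pos (x : ℝ) : 0 < stdPdf x := by
  unfold stdPdf
  positivity

lemma continuous_stdPdf : Continuous stdPdf := by
  unfold stdPdf
  fun_prop

lemma integrable_stdPdf : Integrable stdPdf := by
  have h := (integrable_exp_neg_mul_sq (b := 1 / 2) (by norm_num)).const_mul
    (Real.sqrt (2 * Real.pi))⁻¹
  refine h.congr (.of_forall fun x => ?_)
  simp only [stdPdf]
  ring_nf

lemma stdPdf_neg (x : ℝ) : stdPdf (-x) = stdPdf x := by
  simp [stdPdf]

lemma stdPdf_le (x : ℝ) : stdPdf x ≤ (Real.sqrt (2 * Real.pi))⁻¹ := by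
  unfold stdPdf
  refine mul_le_of_le_one_right (by positivity) (Real.exp_le_one_iff.2 ?_)
  nlinarith [sq_nonneg x]

lemma hasDerivAt_stdCdf (x : ℝ) : HasDerivAt stdCdf (stdPdf x) x := by
  have h : stdCdf = fun x => stdCdf 0 + ∫ u in (0 : ℝ)..x, stdPdf u := by
    funext x
    rw [← intervalIntegral.integral_Iic_sub_Iic integrable_stdPdf.integrableOn
      integrable_stdPdf.integrableOn]
    simp [stdCdf]
  rw [h]
  exact (continuous_stdPdf.integral_hasStrictDerivAt 0 x).hasDerivAt.const_add _

lemma stdCdf_pos (x : ℝ) : 0 < stdCdf x := by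
  unfold stdCdf
  rw [setIntegral_pos_iff_support_of_nonneg_ae (.of_forall fun u => (stdPdf_pos u).le)
    integrable_stdPdf.integrableOn]
  have : Function.support stdPdf = Set.univ :=
    Set.eq_univ_of_forall fun u => (stdPdf_pos u).ne'
  simp [this]

lemma stdCdf_le (x : ℝ) : stdCdf x ≤ ∫ u, stdPdf u :=
  setIntegral_le_integral integrable_stdPdf (.of_forall fun u => (stdPdf_pos u).le)

lemma stdCdf_eq_integral_add (x : ℝ) : stdCdf x = ∫ t in Set.Iic 0, stdPdf (x + t) := by
  have h := (measurePreserving_add_left volume x).setIntegral_preimage_emb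
    (measurableEmbedding_addLeft x) stdPdf (Set.Iic x)
  simpa [stdCdf] using h.symm

/-- The inverse Mills ratio `stdPdf / stdCdf` is strictly decreasing. -/
lemma stdPdf_mul_stdCdf_lt {a b : ℝ} (hab : a < b) :
    stdPdf b * stdCdf a < stdPdf a * stdCdf b := by
  have hint (x c : ℝ) : IntegrableOn (fun t => c * stdPdf (x + t)) (Set.Iic 0) :=
    ((integrable_stdPdf.comp_add_left x).const_mul c).integrableOn
  have hlt {t : ℝ} (ht : t < 0) : stdPdf b * stdPdf (a + t) < stdPdf a * stdPdf (b + t) := by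
    have hexp : Real.exp (-b ^ 2 / 2) * Real.exp (-(a + t) ^ 2 / 2) <
        Real.exp (-a ^ 2 / 2) * Real.exp (-(b + t) ^ 2 / 2) := by
      rw [← Real.exp_add, ← Real.exp_add, Real.exp_lt_exp]
      nlinarith
    have hc : 0 < (Real.sqrt (2 * Real.pi))⁻¹ ^ 2 := by positivity
    simp only [stdPdf]
    nlinarith [mul_lt_mul_of_pos_left hexp hc]
  rw [stdCdf_eq_integral_add, stdCdf_eq_integral_add, ← integral_const_mul, ← integral_const_mul,
    ← sub_pos, ← integral_sub (hint _ _) (hint _ _), integral_Iic_eq_integral_Iio,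
    setIntegral_pos_iff_support_of_nonneg_ae]
  · have hs : Set.Iio (0 : ℝ) ⊆
        Function.support fun t => stdPdf a * stdPdf (b + t) - stdPdf b * stdPdf (a + t) :=
      fun t ht => (sub_pos.2 (hlt ht)).ne'
    rw [Set.inter_eq_right.2 hs]
    simp
  · filter_upwards [ae_restrict_mem measurableSet_Iio] with t ht using (sub_pos.2 (hlt ht)).le
  · exact ((hint b _).sub (hint a _)).mono_set Set.Iio_subset_Iic_self

lemma hasDerivAt_stdCdf_sign_mul {y : ℝ} (hy : y = -1 ∨ y = 1) (x : ℝ) :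
    HasDerivAt (fun x => stdCdf (y * x)) (y * stdPdf x) x := by
  have h := (hasDerivAt_stdCdf (y * x)).comp x ((hasDerivAt_id x).const_mul y)
  refine h.congr_deriv ?_
  rcases hy with rfl | rfl <;> simp [stdPdf_neg]

lemma sub_mul_stdCdf_sign_mul_neg {y : ℝ} (hy : y = -1 ∨ y = 1) {m x : ℝ} (hx : x ≠ m) :
    (x - m) * (y * stdPdf x * stdCdf (y * m) - y * stdPdf m * stdCdf (y * x)) < 0 := by
  rcases hy with rfl | rfl <;> rcases hx.lt_or_gt with h | h
  · have := stdPdf_mul_stdCdf_lt (neg_lt_neg h)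
    simp only [stdPdf_neg] at this
    simp only [neg_one_mul]
    nlinarith
  · have := stdPdf_mul_stdCdf_lt (neg_lt_neg h)
    simp only [stdPdf_neg] at this
    simp only [neg_one_mul]
    nlinarith
  · have := stdPdf_mul_stdCdf_lt h
    simp only [one_mul]
    nlinarith
  · have := stdPdf_mul_stdCdf_lt h
    simp only [one_mul]
    nlinarith

end ProbitLink

section TiltedGaussian

variable {μ σ : ℝ}

lemma gPdf_pos (hσ : 0 < σ) (x : ℝ) : 0 < gPdf μ σ x := by
  unfold gPdf
  positivity

lemma continuous_gPdf : Continuous (gPdf μ σ) := by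
  unfold gPdf
  fun_prop

lemma hasDerivAt_gPdf (x : ℝ) :
    HasDerivAt (gPdf μ σ) (-((x - μ) / σ ^ 2) * gPdf μ σ x) x := by
  have h : HasDerivAt (fun x : ℝ => -(x - μ) ^ 2 / (2 * σ ^ 2)) (-((x - μ) / σ ^ 2)) x := by
    refine ((((hasDerivAt_id x).sub_const μ).pow 2).neg.div_const (2 * σ ^ 2)).congr_deriv ?_
    simp only [id_eq]
    rw [← neg_div, ← mul_div_mul_left (-(x - μ)) (σ ^ 2) two_ne_zero]
    congr 1
    ring
  refine (h.exp.const_mul (σ * Real.sqrt (2 * Real.pi))⁻¹).congr_deriv ?_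
  simp only [gPdf]
  ring

lemma integrable_sub_pow_mul_gPdf (hσ : 0 < σ) (n : ℕ) :
    Integrable fun x => (x - μ) ^ n * gPdf μ σ x := by
  have hb : 0 < 1 / (2 * σ ^ 2) := by positivity
  have h := ((integrable_rpow_mul_exp_neg_mul_sq hb (s := n)
    (by linarith [n.cast_nonneg (α := ℝ)])).comp_sub_right μ).const_mul
      (σ * Real.sqrt (2 * Real.pi))⁻¹
  refine h.congr (.of_forall fun x => ?_)
  simp only [gPdf, Real.rpow_natCast]
  rw [show -(x - μ) ^ 2 / (2 * σ ^ 2) = -(1 / (2 * σ ^ 2)) * (x - μ) ^ 2 by ring]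
  ring

lemma integrable_quadratic_mul_gPdf (hσ : 0 < σ) {B : ℝ → ℝ} (hB : Continuous B) {C : ℝ}
    (hC : ∀ x, |B x| ≤ C) (a b c : ℝ) :
    Integrable fun x => (a + b * x + c * x ^ 2) * (B x * gPdf μ σ x) := by
  have h0 := (integrable_sub_pow_mul_gPdf (μ := μ) hσ 0).const_mul (a + b * μ + c * μ ^ 2)
  have h1 := (integrable_sub_pow_mul_gPdf (μ := μ) hσ 1).const_mul (b + 2 * c * μ)
  have h2 := (integrable_sub_pow_mul_gPdf (μ := μ) hσ 2).const_mul c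
  refine (((h0.add h1).add h2).bdd_mul hB.aestronglyMeasurable (.of_forall hC)).congr
    (.of_forall fun x => ?_)
  simp only [Pi.add_apply]
  ring

/-- Tilting a Gaussian by a positive weight `F` with strictly decreasing logarithmic derivative
gives a law with positive variance, strictly smaller than that of the Gaussian. -/
lemma variance_tilted_gPdf (hσ : 0 < σ) {F F' : ℝ → ℝ} (hF : ∀ x, 0 < F x)
    (hderiv : ∀ x, HasDerivAt F (F' x) x) (hF' : Continuous F') {C C' : ℝ}
    (hC : ∀ x, |F x| ≤ C) (hC' : ∀ x, |F' x| ≤ C')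
    (hlog : ∀ m x, x ≠ m → (x - m) * (F' x * F m - F' m * F x) < 0)
    {Z m : ℝ} (hZ : Z = ∫ x, F x * gPdf μ σ x) (hm : m = ∫ x, x * (Z⁻¹ * F x * gPdf μ σ x)) :
    0 < ∫ x, (x - m) ^ 2 * (Z⁻¹ * F x * gPdf μ σ x) ∧
      ∫ x, (x - m) ^ 2 * (Z⁻¹ * F x * gPdf μ σ x) < σ ^ 2 := by
  have hFc : Continuous F := continuous_iff_continuousAt.2 fun x => (hderiv x).continuousAt
  have hg : Continuous (gPdf μ σ) := continuous_gPdf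
  have hI := integrable_quadratic_mul_gPdf (μ := μ) hσ hFc hC
  have hI' := integrable_quadratic_mul_gPdf (μ := μ) hσ hF' hC'
  have hpos (x : ℝ) : 0 < F x * gPdf μ σ x := mul_pos (hF x) (gPdf_pos hσ x)
  have hI0 : Integrable fun x => F x * gPdf μ σ x := by simpa using hI 1 0 0
  have hI1 : Integrable fun x => x * (F x * gPdf μ σ x) := by simpa using hI 0 1 0
  have hIm : Integrable fun x => (x - m) * (F x * gPdf μ σ x) :=
    (hI (-m) 1 0).congr (.of_forall fun x => by ring)
  have hI2 : Integrable fun x => (x - m) ^ 2 * (F x * gPdf μ σ x) :=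
    (hI (m ^ 2) (-2 * m) 1).congr (.of_forall fun x => by ring)
  have hIm' : Integrable fun x => (x - m) * (F' x * gPdf μ σ x) :=
    (hI' (-m) 1 0).congr (.of_forall fun x => by ring)
  have hZpos : 0 < Z := by
    rw [hZ]
    exact integral_pos_of_integrable_nonneg_nonzero (x := 0) (by fun_prop) hI0
      (fun x => (hpos x).le) (hpos 0).ne'
  have hvar : ∫ x, (x - m) ^ 2 * (Z⁻¹ * F x * gPdf μ σ x) =
      Z⁻¹ * ∫ x, (x - m) ^ 2 * (F x * gPdf μ σ x) := by
    rw [← integral_const_mul]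
    congr with x
    ring
  have hmean : ∫ x, x * (F x * gPdf μ σ x) = m * Z := by
    have : m = Z⁻¹ * ∫ x, x * (F x * gPdf μ σ x) := by
      conv_lhs => rw [hm]
      rw [← integral_const_mul]
      congr with x
      ring
    rw [this]
    field_simp
  have hcenter : ∫ x, (x - m) * (F x * gPdf μ σ x) = 0 := by
    simp only [sub_mul]
    rw [integral_sub hI1 (hI0.const_mul m), integral_const_mul, hmean, ← hZ, sub_self]
  have hstein : Z + ∫ x, (x - m) * (F' x * gPdf μ σ x) =
      (∫ x, (x - m) ^ 2 * (F x * gPdf μ σ x)) / σ ^ 2 := by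
    have hsum : Integrable fun x => F x * gPdf μ σ x + (x - m) * (F' x * gPdf μ σ x) :=
      hI0.add hIm'
    have hsum' : Integrable fun x => (σ ^ 2)⁻¹ * ((x - m) ^ 2 * (F x * gPdf μ σ x)) +
        (m - μ) / σ ^ 2 * ((x - m) * (F x * gPdf μ σ x)) :=
      (hI2.const_mul _).add (hIm.const_mul _)
    have hparts := integral_eq_zero_of_hasDerivAt_of_integrable
      (f := fun x => (x - m) * (F x * gPdf μ σ x))
      (f' := fun x => F x * gPdf μ σ x + (x - m) * (F' x * gPdf μ σ x) -
        ((σ ^ 2)⁻¹ * ((x - m) ^ 2 * (F x * gPdf μ σ x)) +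
          (m - μ) / σ ^ 2 * ((x - m) * (F x * gPdf μ σ x))))
      (fun x => by
        refine (((hasDerivAt_id x).sub_const m).mul
          ((hderiv x).mul (hasDerivAt_gPdf x))).congr_deriv ?_
        simp only [id_eq, Pi.mul_apply]
        ring)
      (hsum.sub hsum') hIm
    rw [integral_sub hsum hsum',
      integral_add hI0 hIm', integral_add (hI2.const_mul _) (hIm.const_mul _),
      integral_const_mul, integral_const_mul, hcenter, ← hZ] at hparts
    rw [div_eq_inv_mul]
    linarith
  have hcov : ∫ x, (x - m) * (F' x * gPdf μ σ x) < 0 := by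
    have hexpand (x : ℝ) : -((x - m) * (F' x * F m - F' m * F x)) * gPdf μ σ x =
        F' m * ((x - m) * (F x * gPdf μ σ x)) - F m * ((x - m) * (F' x * gPdf μ σ x)) := by
      ring
    have hpos : 0 < ∫ x, -((x - m) * (F' x * F m - F' m * F x)) * gPdf μ σ x := by
      refine integral_pos_of_integrable_nonneg_nonzero (x := m + 1) (by fun_prop) ?_
        (fun x => ?_) ?_
      · simp only [hexpand]
        exact (hIm.const_mul _).sub (hIm'.const_mul _)
      · rcases eq_or_ne x m with rfl | hx
        · simp
        · exact mul_nonneg (neg_nonneg.2 (hlog m x hx).le) (gPdf_pos hσ x).le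
      · exact mul_ne_zero (neg_ne_zero.2 (hlog m (m + 1) (by simp)).ne) (gPdf_pos hσ _).ne'
    simp only [hexpand] at hpos
    rw [integral_sub (hIm.const_mul _) (hIm'.const_mul _), integral_const_mul,
      integral_const_mul, hcenter] at hpos
    nlinarith [hF m]
  rw [hvar]
  constructor
  · refine mul_pos (inv_pos.2 hZpos) ?_
    refine integral_pos_of_integrable_nonneg_nonzero (x := m + 1) (by fun_prop) hI2
      (fun x => mul_nonneg (sq_nonneg _) (hpos x).le) ?_
    simpa using (hpos (m + 1)).ne'
  · rw [inv_mul_lt_iff₀ hZpos, ← div_lt_iff₀ (by positivity)]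
    linarith

end TiltedGaussian

/-- Conditioning a Gaussian on a probit observation strictly reduces variance:
if `σ̂²` is the variance of `p(x) ∝ Φ(y x) φ(x; μ, σ²)` then `0 < σ̂² < σ²`. -/
theorem stmt5 (y μ σ : ℝ) (hy : y = -1 ∨ y = 1) (hσ : 0 < σ)
    (Z : ℝ) (hZ : Z = ∫ x : ℝ, stdCdf (y * x) * gPdf μ σ x)
    (p : ℝ → ℝ) (hp : p = fun x => Z⁻¹ * stdCdf (y * x) * gPdf μ σ x)
    (μhat : ℝ) (hμhat : μhat = ∫ x : ℝ, x * p x)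
    (σhat2 : ℝ) (hσhat2 : σhat2 = ∫ x : ℝ, (x - μhat) ^ 2 * p x) :
    0 < σhat2 ∧ σhat2 < σ ^ 2 := by
  subst hp hσhat2
  refine variance_tilted_gPdf hσ (F := fun x => stdCdf (y * x)) (F' := fun x => y * stdPdf x)
    (C := ∫ u, stdPdf u) (C' := (Real.sqrt (2 * Real.pi))⁻¹)
    (fun x => stdCdf_pos _) (hasDerivAt_stdCdf_sign_mul hy) (continuous_stdPdf.const_mul y)
    (fun x => ?_) (fun x => ?_) (fun m x hx => sub_mul_stdCdf_sign_mul_neg hy hx) hZ hμhat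
  · rw [abs_of_pos (stdCdf_pos _)]
    exact stdCdf_le _
  · have hy1 : |y| = 1 := by rcases hy with rfl | rfl <;> simp
    rw [abs_mul, hy1, one_mul, abs_of_pos (stdPdf_pos x)]
    exact stdPdf_le x
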